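/- arXiv:math/0511628 — 3 statements merged into one kernel-verified Lean document; each statement's English description precedes it below -/
import Mathlib

section
/- Let K be an algebraically closed field and n ≥ 2. The coordinate ring K[SL_n] is a unique factorisation domain, and the restriction Δ'_{n-1} of the (n−1)-th principal minor to SL_n is an irreducible element of K[SL_n]. -/
open MvPolynomial

/-- The determinant of the generic `n × n` matrix in `K[Mat_n] = K[ξ_{ij}]`. -/
noncomputable def genDet (K : Type*) [CommRing K] (n : ℕ) :
    MvPolynomial (Fin n × Fin n) K :=
  Matrix.det (Matrix.of fun i j : Fin n => X (i, j))

/-- The `k`-th principal minor `Δ_k` of the generic `n × n` matrix. -/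
noncomputable def genDelta (K : Type*) [CommRing K] (n : ℕ) (k : ℕ) (hk : k ≤ n) :
    MvPolynomial (Fin n × Fin n) K :=
  Matrix.det (Matrix.of fun i j : Fin k => X (Fin.castLE hk i, Fin.castLE hk j))

/-!
The adjugate of a matrix of determinant `1` is its inverse, so inversion on `SL_n` is an
involution of the coordinate ring exchanging the corner entry `x_{nn}` with `Δ'_{n-1}`. Modulo
`x_{nn}`, the equation `det - 1` becomes the determinant of the generic matrix with a zero in the
corner, minus `1`; this is linear in another variable of the last row and irreducible. Hence
`x_{nn}` is prime, and so is `Δ'_{n-1}`.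

On the other hand `det = Δ_{n-1} x_{nn} + r` with `Δ_{n-1}` and `r` free of `x_{nn}`. Once
`Δ_{n-1}` is inverted, `det = 1` can be solved for `x_{nn}`, so `K[SL_n][1 / Δ'_{n-1}]` is a
localization of a polynomial ring, and Nagata's criterion shows that `K[SL_n]` is factorial.
-/

section Localization

variable {B A : Type*} [CommRing B] [CommRing A] [Algebra B A]

theorem isLocalization_away_of_injective_of_exists_pow_mul (L : Type*) [CommRing L] [Algebra A L]
    [Algebra B L] [IsScalarTower B A L] (b : B) [IsLocalization.Away (algebraMap B A b) L]
    (hinj : Function.Injective (algebraMap B A))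
    (hsurj : ∀ a : A, ∃ (N : ℕ) (c : B), algebraMap B A b ^ N * a = algebraMap B A c) :
    IsLocalization.Away b L := by
  refine IsLocalization.Away.mk b ?_ (fun z => ?_) (fun c d hcd => ?_)
  · rw [IsScalarTower.algebraMap_apply B A L]
    exact IsLocalization.Away.algebraMap_isUnit _
  · obtain ⟨N, a, ha⟩ := IsLocalization.Away.surj (algebraMap B A b) z
    obtain ⟨N', c, hc⟩ := hsurj a
    refine ⟨N + N', c, ?_⟩
    rw [IsScalarTower.algebraMap_apply B A L c, ← hc, map_mul, ← ha, map_pow,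
      ← IsScalarTower.algebraMap_apply]
    ring
  · simp only [IsScalarTower.algebraMap_apply B A L] at hcd
    obtain ⟨N, hN⟩ := IsLocalization.Away.exists_of_eq (algebraMap B A b) hcd
    exact ⟨N, hinj (by simpa only [map_mul, map_pow] using hN)⟩

end Localization

section LinearInOneVariable

variable {R σ : Type*} [CommRing R] {s : σ} {m r p f : MvPolynomial σ R}

theorem mem_supported_compl_singleton_iff_notMem_vars :
    p ∈ supported R ({s}ᶜ : Set σ) ↔ s ∉ p.vars := by
  rw [mem_supported, Set.subset_compl_singleton_iff, Finset.mem_coe]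

theorem mem_supported_compl_singleton_iff_degreeOf_eq_zero :
    p ∈ supported R ({s}ᶜ : Set σ) ↔ degreeOf s p = 0 := by
  rw [mem_supported_compl_singleton_iff_notMem_vars, mem_vars_iff_degreeOf_ne_zero, not_not]

theorem prime_mul_X_add_of_eval [IsDomain R] [UniqueFactorizationMonoid R]
    (hm : m ∈ supported R ({s}ᶜ : Set σ)) (hr : r ∈ supported R ({s}ᶜ : Set σ)) (hprime : Prime m)
    (v : σ → R) (hvm : eval v m = 0) (hvr : eval v r ≠ 0) : Prime (m * X s + r) := by
  have hndvd : ¬ m ∣ r := fun h => hvr (zero_dvd_iff.1 (hvm ▸ map_dvd (eval v) h))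
  rw [mem_supported_compl_singleton_iff_notMem_vars] at hm hr
  exact (irreducible_mul_X_add m r s hprime.ne_zero hm hr
    (hprime.irreducible.isRelPrime_iff_not_dvd.2 hndvd)).prime

theorem X_dvd_sub_aeval_update_zero [DecidableEq σ] (s : σ) (f : MvPolynomial σ R) :
    X s ∣ f - aeval (Function.update X s 0) f := by
  rw [← Ideal.mem_span_singleton, ← Ideal.Quotient.mk_eq_mk_iff_sub_mem]
  let π := Ideal.Quotient.mkₐ R (Ideal.span {(X s : MvPolynomial σ R)})
  suffices π = π.comp (aeval (Function.update X s 0)) from DFunLike.congr_fun this f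
  refine algHom_ext fun t => ?_
  obtain rfl | hts := eq_or_ne t s
  · simp [π]
  · simp [Function.update_of_ne hts]

theorem mk_X_dvd_mk_iff [DecidableEq σ] :
    Ideal.Quotient.mk (Ideal.span {p}) (X s) ∣ Ideal.Quotient.mk _ f ↔
      aeval (Function.update X s 0) p ∣ (aeval (Function.update X s 0) f : MvPolynomial σ R) := by
  set ε : MvPolynomial σ R →ₐ[R] MvPolynomial σ R := aeval (Function.update X s 0)
  constructor
  · rintro ⟨c, hc⟩
    obtain ⟨c, rfl⟩ := Ideal.Quotient.mk_surjective c
    rw [← map_mul, Ideal.Quotient.mk_eq_mk_iff_sub_mem, Ideal.mem_span_singleton] at hc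
    simpa [ε] using map_dvd ε hc
  · rintro ⟨c, hc⟩
    obtain ⟨a, ha⟩ : X s ∣ f - ε f := X_dvd_sub_aeval_update_zero s f
    obtain ⟨b, hb⟩ : X s ∣ p - ε p := X_dvd_sub_aeval_update_zero s p
    refine ⟨Ideal.Quotient.mk _ (a - b * c), ?_⟩
    rw [← map_mul, Ideal.Quotient.mk_eq_mk_iff_sub_mem, Ideal.mem_span_singleton]
    exact ⟨c, by linear_combination ha + hc - c * hb⟩

theorem prime_mk_X_of_prime_aeval_update_zero [IsDomain R] [DecidableEq σ]
    (hp : Prime (aeval (Function.update X s 0) p : MvPolynomial σ R)) :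
    Prime (Ideal.Quotient.mk (Ideal.span {p}) (X s)) := by
  refine ⟨fun hzero => ?_, fun hunit => ?_, fun a b hab => ?_⟩
  · rw [Ideal.Quotient.eq_zero_iff_mem, Ideal.mem_span_singleton] at hzero
    obtain ⟨q, hq⟩ := hzero
    obtain hpunit | hqunit := (X_prime (i := s)).irreducible.isUnit_or_isUnit hq
    · exact hp.not_isUnit (hpunit.map _)
    · have hmul := congrArg (aeval (Function.update X s (0 : MvPolynomial σ R))) hq
      rw [aeval_X, Function.update_self, map_mul, eq_comm, (hqunit.map _).mul_left_eq_zero] at hmul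
      exact hp.ne_zero hmul
  · have hdvd := mk_X_dvd_mk_iff.1 (hunit.dvd : _ ∣ Ideal.Quotient.mk (Ideal.span {p}) 1)
    rw [map_one] at hdvd
    exact hp.not_isUnit (isUnit_of_dvd_one hdvd)
  · obtain ⟨a, rfl⟩ := Ideal.Quotient.mk_surjective a
    obtain ⟨b, rfl⟩ := Ideal.Quotient.mk_surjective b
    rw [← map_mul, mk_X_dvd_mk_iff, map_mul] at hab
    simpa only [mk_X_dvd_mk_iff] using hp.dvd_or_dvd hab

theorem eq_zero_of_mul_X_add_dvd [IsDomain R] (hm : m ∈ supported R ({s}ᶜ : Set σ)) (hm0 : m ≠ 0)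
    (hr : r ∈ supported R ({s}ᶜ : Set σ)) (hf : f ∈ supported R ({s}ᶜ : Set σ))
    (hdvd : m * X s + r ∣ f) : f = 0 := by
  rw [mem_supported_compl_singleton_iff_degreeOf_eq_zero] at hm hr hf
  have hdeg : degreeOf s (m * X s + r) = 1 := by
    have hmX : degreeOf s (m * X s) = 1 := by
      rw [degreeOf_mul_eq hm0 (X_ne_zero s), hm, degreeOf_X_self]
    rw [degreeOf_add_eq_of_degreeOf_lt (by omega), hmX]
  obtain ⟨c, rfl⟩ := hdvd
  by_contra hne
  rw [degreeOf_mul_eq (left_ne_zero_of_mul hne) (right_ne_zero_of_mul hne), hdeg] at hf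
  omega

theorem exists_mul_X_add_dvd_pow_mul_sub (hm : m ∈ supported R ({s}ᶜ : Set σ))
    (hr : r ∈ supported R ({s}ᶜ : Set σ)) (f : MvPolynomial σ R) :
    ∃ N : ℕ, ∃ g ∈ supported R ({s}ᶜ : Set σ), m * X s + r ∣ m ^ N * f - g := by
  induction f using MvPolynomial.induction_on with
  | C a => exact ⟨0, C a, (supported R _).algebraMap_mem a, by simp⟩
  | add f f' hf hf' =>
    obtain ⟨N, g, hg, c, hc⟩ := hf
    obtain ⟨N', g', hg', c', hc'⟩ := hf'
    refine ⟨N + N', m ^ N' * g + m ^ N * g', add_mem (mul_mem (pow_mem hm _) hg)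
      (mul_mem (pow_mem hm _) hg'), m ^ N' * c + m ^ N * c', ?_⟩
    linear_combination m ^ N' * hc + m ^ N * hc'
  | mul_X f t hf =>
    obtain ⟨N, g, hg, c, hc⟩ := hf
    obtain rfl | hts := eq_or_ne t s
    · refine ⟨N + 1, -(r * g), neg_mem (mul_mem hr hg), m * X t * c + g, ?_⟩
      linear_combination m * X t * hc
    · nontriviality R
      refine ⟨N, g * X t, mul_mem hg (X_mem_supported.2 hts), X t * c, ?_⟩
      linear_combination X t * hc

theorem uniqueFactorizationMonoid_quotient_mul_X_add [IsDomain R] [IsNoetherianRing R]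
    [UniqueFactorizationMonoid R] [Finite σ] (hp : p = m * X s + r)
    (hm : m ∈ supported R ({s}ᶜ : Set σ)) (hr : r ∈ supported R ({s}ᶜ : Set σ))
    [(Ideal.span {p}).IsPrime] (hprime : Prime (Ideal.Quotient.mk (Ideal.span {p}) m)) :
    UniqueFactorizationMonoid (MvPolynomial σ R ⧸ Ideal.span {p}) := by
  let B := supported R ({s}ᶜ : Set σ)
  let b : B := ⟨m, hm⟩
  let L := Localization.Away (Ideal.Quotient.mk (Ideal.span {p}) m)
  have hm0 : m ≠ 0 := fun h => hprime.ne_zero (by rw [h, map_zero])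
  have : IsLocalization.Away (algebraMap B (MvPolynomial σ R ⧸ Ideal.span {p}) b) L :=
    inferInstanceAs (IsLocalization.Away (Ideal.Quotient.mk (Ideal.span {p}) m) L)
  have : IsLocalization.Away b L := by
    refine isLocalization_away_of_injective_of_exists_pow_mul
      (A := MvPolynomial σ R ⧸ Ideal.span {p}) L b ?_ fun a => ?_
    · refine (injective_iff_map_eq_zero _).2 fun c hc => Subtype.ext ?_
      refine eq_zero_of_mul_X_add_dvd hm hm0 hr c.2 ?_
      exact hp ▸ Ideal.mem_span_singleton.1 (Ideal.Quotient.eq_zero_iff_mem.1 hc)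
    · obtain ⟨f, rfl⟩ := Ideal.Quotient.mk_surjective a
      obtain ⟨N, g, hg, hdvd⟩ := exists_mul_X_add_dvd_pow_mul_sub hm hr f
      refine ⟨N, ⟨g, hg⟩, ?_⟩
      rw [← hp, ← Ideal.mem_span_singleton, ← Ideal.Quotient.mk_eq_mk_iff_sub_mem, map_mul,
        map_pow] at hdvd
      exact hdvd
  have : UniqueFactorizationMonoid B :=
    (supportedEquivMvPolynomial ({s}ᶜ : Set σ)).symm.toMulEquiv.uniqueFactorizationMonoid
      inferInstance
  rw [UniqueFactorizationMonoid.iff_of_isLocalizationAway_of_prime hprime L]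
  exact UniqueFactorizationMonoid.of_isLocalization (Submonoid.powers b) L

end LinearInOneVariable

section Matrix

variable {n S : Type*} [Fintype n] [DecidableEq n] [CommRing S]

theorem det_mem_of_forall_mem {R : Type*} [CommRing R] [Algebra R S] (T : Subalgebra R S)
    {M : Matrix n n S} (h : ∀ i j, M i j ∈ T) : M.det ∈ T := by
  rw [Matrix.det_apply]
  exact sum_mem fun τ _ => zsmul_mem (prod_mem fun i _ => h _ _) _

theorem adjugate_adjugate_of_det_eq_one {M : Matrix n n S} (hM : M.det = 1) :
    M.adjugate.adjugate = M :=
  let g : Matrix.SpecialLinearGroup n S := ⟨M, hM⟩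
  congrArg Subtype.val (inv_inv g)

theorem adjugate_updateRow_self (M : Matrix n n S) (i j : n) (w : n → S) :
    (M.updateRow i w).adjugate j i = M.adjugate j i := by
  simp only [Matrix.adjugate_apply, Matrix.updateRow_idem]

theorem det_eq_adjugate_mul_add_det_updateRow (M : Matrix n n S) (i j : n) :
    M.det = M.adjugate j i * M i j + (M.updateRow i (Function.update (M i) j 0)).det := by
  have hrow : M i = M i j • Pi.single j 1 + Function.update (M i) j 0 := by
    ext b
    obtain rfl | hb := eq_or_ne b j <;> simp [*]
  conv_lhs => rw [← M.updateRow_eq_self i, hrow]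
  rw [Matrix.det_updateRow_add, Matrix.det_updateRow_smul, Matrix.adjugate_apply, mul_comm]

theorem adjugate_associated_det_submatrix {k : ℕ} (M : Matrix (Fin (k + 1)) (Fin (k + 1)) S)
    (i j : Fin (k + 1)) :
    Associated (M.adjugate j i) (M.submatrix i.succAbove j.succAbove).det := by
  rw [Matrix.adjugate_fin_succ_eq_det_submatrix]
  exact associated_unit_mul_left _ _ (isUnit_one.neg.pow _)

end Matrix

section PolynomialMatrix

variable {n R σ : Type*} [Fintype n] [DecidableEq n] [CommRing R]
  {M : Matrix n n (MvPolynomial σ R)} {s : σ} {i j : n}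

theorem adjugate_mem_supported_compl_singleton
    (hM : ∀ a b, (a, b) ≠ (i, j) → M a b ∈ supported R ({s}ᶜ : Set σ)) :
    M.adjugate j i ∈ supported R ({s}ᶜ : Set σ) := by
  rw [Matrix.adjugate_apply]
  refine det_mem_of_forall_mem _ fun a b => ?_
  obtain rfl | ha := eq_or_ne a i
  · obtain rfl | hb := eq_or_ne b j
    · simp
    · simp [hb]
  · simpa [ha] using hM a b (by simp [ha])

theorem det_updateRow_update_zero_mem_supported_compl_singleton
    (hM : ∀ a b, (a, b) ≠ (i, j) → M a b ∈ supported R ({s}ᶜ : Set σ)) :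
    (M.updateRow i (Function.update (M i) j 0)).det ∈ supported R ({s}ᶜ : Set σ) := by
  refine det_mem_of_forall_mem _ fun a b => ?_
  obtain rfl | ha := eq_or_ne a i
  · obtain rfl | hb := eq_or_ne b j
    · simp
    · simpa [hb] using hM a b (by simp [hb])
  · simpa [ha] using hM a b (by simp [ha])

theorem prime_det_sub_C_of_eval [IsDomain R] [UniqueFactorizationMonoid R] (hs : M i j = X s)
    (hM : ∀ a b, (a, b) ≠ (i, j) → M a b ∈ supported R ({s}ᶜ : Set σ))
    (hadj : Prime (M.adjugate j i)) {v : σ → R} {c : R} (hv : (M.map (eval v)).adjugate j i = 0)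
    (hc : (M.map (eval v)).det ≠ c) : Prime (M.det - C c) := by
  have hdet := det_eq_adjugate_mul_add_det_updateRow M i j
  have hvadj : eval v (M.adjugate j i) = 0 := by
    rw [← hv]
    exact congrFun₂ ((eval v).map_adjugate M) j i
  have hvdet : eval v M.det = (M.map (eval v)).det := (eval v).map_det M
  rw [hs] at hdet
  rw [hdet, add_sub_assoc]
  refine prime_mul_X_add_of_eval (adjugate_mem_supported_compl_singleton hM)
    (sub_mem (det_updateRow_update_zero_mem_supported_compl_singleton hM)
      ((supported R _).algebraMap_mem c)) hadj v hvadj ?_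
  rw [hdet, map_add, map_mul, hvadj, zero_mul, zero_add] at hvdet
  rwa [map_sub, hvdet, eval_C, sub_ne_zero]

end PolynomialMatrix

section VarMatrix

variable {R σ : Type*} [CommRing R] {k : ℕ}

/-- The matrix whose `(i, j)` entry is the variable `X (f i j)`. For injective `f` this is a generic
matrix, possibly inside a polynomial ring with more variables, so that its minors are again of
this form. -/
noncomputable def varMatrix (R : Type*) [CommRing R] {n σ : Type*} (f : n → n → σ) :
    Matrix n n (MvPolynomial σ R) :=
  Matrix.of fun i j => X (f i j)

theorem varMatrix_apply_mem_supported_compl_singleton [Nontrivial R] {n : Type*} {f : n → n → σ}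
    (hf : Function.Injective2 f) {i j a b : n} (h : (a, b) ≠ (i, j)) :
    varMatrix R f a b ∈ supported R ({f i j}ᶜ : Set σ) :=
  X_mem_supported.2 fun heq => h (Prod.ext_iff.2 (hf heq))

theorem injective2_comp_injective {α β α' β' γ : Sort*} {f : α → β → γ} {g : α' → α} {h : β' → β}
    (hf : Function.Injective2 f) (hg : Function.Injective g) (hh : Function.Injective h) :
    Function.Injective2 fun a b => f (g a) (h b) :=
  fun _ _ _ _ heq => (hf heq).imp (@hg _ _) (@hh _ _)

variable [IsDomain R] [UniqueFactorizationMonoid R]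

theorem prime_det_varMatrix {f : Fin (k + 1) → Fin (k + 1) → σ} (hf : Function.Injective2 f) :
    Prime (varMatrix R f).det := by
  induction k with
  | zero => simpa [varMatrix] using X_prime
  | succ k ih =>
    let I : Matrix (Fin (k + 2)) (Fin (k + 2)) R := 1
    let v : σ → R := Function.extend (Function.uncurry f) (Function.uncurry I) 0
    have hv : (varMatrix R f).map (eval v) = 1 := by
      ext a b
      rw [varMatrix, Matrix.map_apply, Matrix.of_apply, eval_X]
      exact hf.uncurry.extend_apply (Function.uncurry I) 0 (a, b)
    have hadj : Prime ((varMatrix R f).adjugate 1 0) :=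
      (adjugate_associated_det_submatrix _ _ _).prime_iff.2
        (ih (injective2_comp_injective hf Fin.succAbove_right_injective
          Fin.succAbove_right_injective))
    -- An off-diagonal cofactor vanishes at the identity matrix, where the determinant does not.
    simpa using prime_det_sub_C_of_eval (c := 0) rfl
      (fun a b => varMatrix_apply_mem_supported_compl_singleton hf) hadj (v := v)
      (by simp [hv]) (by simp [hv])

theorem prime_adjugate_varMatrix {f : Fin (k + 2) → Fin (k + 2) → σ} (hf : Function.Injective2 f)
    (i j : Fin (k + 2)) : Prime ((varMatrix R f).adjugate i j) :=
  (adjugate_associated_det_submatrix _ _ _).prime_iff.2 (prime_det_varMatrix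
    (injective2_comp_injective hf Fin.succAbove_right_injective Fin.succAbove_right_injective))

theorem prime_det_varMatrix_sub_C {f : Fin (k + 2) → Fin (k + 2) → σ} (hf : Function.Injective2 f)
    {c : R} (hc : c ≠ 0) : Prime ((varMatrix R f).det - C c) := by
  have hzero : (varMatrix R f).map (eval 0) = 0 := by
    ext a b
    simp [varMatrix]
  refine prime_det_sub_C_of_eval (i := 0) (j := 0) (v := 0) rfl
    (fun a b => varMatrix_apply_mem_supported_compl_singleton hf)
    (prime_adjugate_varMatrix hf 0 0) ?_ ?_
  · rw [hzero, Matrix.adjugate_zero, Matrix.zero_apply]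
  · rw [hzero, Matrix.det_zero]
    exact hc.symm

theorem prime_det_varMatrix_update_zero_sub_C {f : Fin (k + 2) → Fin (k + 2) → σ}
    (hf : Function.Injective2 f) (i j : Fin (k + 2)) {c : R} (hc : c ≠ 0) :
    Prime (((varMatrix R f).updateRow i (Function.update (varMatrix R f i) j 0)).det - C c) := by
  obtain ⟨l, hl⟩ := exists_ne j
  set M := (varMatrix R f).updateRow i (Function.update (varMatrix R f i) j 0) with hM
  have hentry (a b) : M a b = if (a, b) = (i, j) then 0 else X (f a b) := by
    simp only [hM, Matrix.updateRow_apply, Function.update_apply, Prod.mk.injEq]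
    split_ifs <;> simp_all [varMatrix]
  have hzero : M.map (eval 0) = 0 := by
    ext a b
    rw [Matrix.map_apply, hentry]
    split_ifs <;> simp
  refine prime_det_sub_C_of_eval (i := i) (j := l) (s := f i l) (v := 0) ?_ (fun a b hab => ?_)
    ?_ ?_ ?_
  · simp [hentry, hl]
  · rw [hentry]
    split_ifs
    · exact zero_mem _
    · exact varMatrix_apply_mem_supported_compl_singleton hf hab
  · rw [hM, adjugate_updateRow_self]
    exact prime_adjugate_varMatrix hf l i
  · rw [hzero, Matrix.adjugate_zero, Matrix.zero_apply]
  · rw [hzero, Matrix.det_zero]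
    exact hc.symm

end VarMatrix

section SpecialLinear

/-- The coordinate ring `R[SL_n]` over an arbitrary commutative ring, as an abbreviation so that
everything about quotients of polynomial rings applies to it. -/
abbrev SLRing (R : Type*) [CommRing R] (n : ℕ) :=
  MvPolynomial (Fin n × Fin n) R ⧸ Ideal.span {genDet R n - 1}

namespace SLRing

variable {R : Type*} [CommRing R] {n : ℕ}

/-- The matrix of coordinate functions on `SL_n`, universal among matrices of determinant `1`. -/
noncomputable def universalMatrix (R : Type*) [CommRing R] (n : ℕ) :
    Matrix (Fin n) (Fin n) (SLRing R n) :=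
  (varMatrix R Prod.mk).map (Ideal.Quotient.mk _)

theorem det_universalMatrix : (universalMatrix R n).det = 1 := by
  have hmk : Ideal.Quotient.mk (Ideal.span {genDet R n - 1}) (genDet R n) =
      Ideal.Quotient.mk _ 1 :=
    (Ideal.Quotient.mk_eq_mk_iff_sub_mem _ _).2 (Ideal.mem_span_singleton_self _)
  rw [map_one] at hmk
  exact ((Ideal.Quotient.mk _).map_det _).symm.trans hmk

theorem adjugate_universalMatrix_apply (i j : Fin n) : (universalMatrix R n).adjugate i j =
    Ideal.Quotient.mk _ ((varMatrix R Prod.mk).adjugate i j) :=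
  congrFun₂ ((Ideal.Quotient.mk (Ideal.span {genDet R n - 1})).map_adjugate _).symm i j

section Lift

variable {S : Type*} [CommRing S] [Algebra R S]

theorem algHom_ext {φ ψ : SLRing R n →ₐ[R] S}
    (h : φ.mapMatrix (universalMatrix R n) = ψ.mapMatrix (universalMatrix R n)) : φ = ψ :=
  Ideal.Quotient.algHom_ext _ (MvPolynomial.algHom_ext fun p => congrFun₂ h p.1 p.2)

/-- The homomorphism out of `R[SL_n]` classified by a matrix of determinant `1`. -/
noncomputable def lift (A : Matrix (Fin n) (Fin n) S) (hA : A.det = 1) : SLRing R n →ₐ[R] S :=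
  Ideal.Quotient.liftₐ _ (aeval fun p => A p.1 p.2) fun q hq => by
    have hdet : aeval (fun p => A p.1 p.2) (genDet R n) = (1 : S) := by
      rw [genDet, AlgHom.map_det, ← hA]
      exact congrArg Matrix.det (Matrix.mvPolynomialX_mapMatrix_aeval R A)
    obtain ⟨c, rfl⟩ := Ideal.mem_span_singleton.1 hq
    rw [map_mul, map_sub, hdet, map_one, sub_self, zero_mul]

theorem mapMatrix_lift_universalMatrix (A : Matrix (Fin n) (Fin n) S) (hA : A.det = 1) :
    (lift (R := R) A hA).mapMatrix (universalMatrix R n) = A := by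
  ext i j
  exact aeval_X (fun p : Fin n × Fin n => A p.1 p.2) (i, j)

end Lift

/-- The comorphism of inversion on `SL_n`: a matrix of determinant `1` has its adjugate as
inverse. -/
noncomputable def inversion (R : Type*) [CommRing R] (n : ℕ) : SLRing R n →ₐ[R] SLRing R n :=
  lift (universalMatrix R n).adjugate (by rw [Matrix.det_adjugate, det_universalMatrix, one_pow])

theorem mapMatrix_inversion_universalMatrix :
    (inversion R n).mapMatrix (universalMatrix R n) = (universalMatrix R n).adjugate :=
  mapMatrix_lift_universalMatrix _ _

theorem inversion_comp_inversion :
    (inversion R n).comp (inversion R n) = AlgHom.id R (SLRing R n) := by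
  refine algHom_ext ?_
  calc ((inversion R n).comp (inversion R n)).mapMatrix (universalMatrix R n)
      = (inversion R n).mapMatrix ((inversion R n).mapMatrix (universalMatrix R n)) := rfl
    _ = (universalMatrix R n).adjugate.adjugate := by
        rw [mapMatrix_inversion_universalMatrix, AlgHom.map_adjugate,
          mapMatrix_inversion_universalMatrix]
    _ = universalMatrix R n := adjugate_adjugate_of_det_eq_one det_universalMatrix

/-- Inversion on `SL_n` as an automorphism of the coordinate ring, along which primality passes from
the coordinate functions to the cofactors. -/
noncomputable def inversionEquiv (R : Type*) [CommRing R] (n : ℕ) :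
    SLRing R n ≃ₐ[R] SLRing R n :=
  AlgEquiv.ofAlgHom (inversion R n) (inversion R n) inversion_comp_inversion
    inversion_comp_inversion

end SLRing

theorem genDelta_eq_adjugate {R : Type*} [CommRing R] (k : ℕ) (hk : k ≤ k + 1) :
    genDelta R (k + 1) k hk = (varMatrix R Prod.mk).adjugate (Fin.last k) (Fin.last k) := by
  rw [Matrix.adjugate_fin_succ_eq_det_submatrix, Even.neg_one_pow ⟨_, rfl⟩, one_mul,
    Fin.succAbove_last]
  rfl

theorem aeval_update_zero_det_varMatrix {n R σ : Type*} [Fintype n] [DecidableEq n] [CommRing R]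
    [DecidableEq σ] {f : n → n → σ} (hf : Function.Injective2 f) (i j : n) :
    aeval (Function.update X (f i j) 0) (varMatrix R f).det =
      ((varMatrix R f).updateRow i (Function.update (varMatrix R f i) j 0)).det := by
  rw [AlgHom.map_det]
  congr 1
  ext1 a b
  simp only [AlgHom.mapMatrix_apply, Matrix.map_apply, varMatrix, Matrix.of_apply, aeval_X,
    Function.update_apply, hf.eq_iff, Matrix.updateRow_apply]
  split_ifs <;> simp_all

variable {R : Type*} [CommRing R] [IsDomain R] [UniqueFactorizationMonoid R] (k : ℕ)

theorem isPrime_span_genDet_sub_one : (Ideal.span {genDet R (k + 2) - 1}).IsPrime := by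
  have hprime : Prime (genDet R (k + 2) - C 1) :=
    prime_det_varMatrix_sub_C (fun _ _ _ _ => Prod.mk.inj) one_ne_zero
  rw [C_1] at hprime
  exact (Ideal.span_singleton_prime hprime.ne_zero).2 hprime

theorem prime_universalMatrix_apply (i j : Fin (k + 2)) :
    Prime (SLRing.universalMatrix R (k + 2) i j) := by
  have hinj : Function.Injective2 (Prod.mk : Fin (k + 2) → Fin (k + 2) → _) :=
    fun _ _ _ _ => Prod.mk.inj
  refine prime_mk_X_of_prime_aeval_update_zero ?_
  rw [map_sub, map_one, ← C_1]
  exact aeval_update_zero_det_varMatrix (R := R) hinj i j ▸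
    prime_det_varMatrix_update_zero_sub_C hinj i j one_ne_zero

theorem prime_mk_genDelta (hk : k + 1 ≤ k + 2) :
    Prime (Ideal.Quotient.mk (Ideal.span {genDet R (k + 2) - 1})
      (genDelta R (k + 2) (k + 1) hk)) := by
  have hinv : SLRing.inversionEquiv R (k + 2)
      (SLRing.universalMatrix R (k + 2) (Fin.last _) (Fin.last _)) =
      Ideal.Quotient.mk _ (genDelta R (k + 2) (k + 1) hk) := by
    rw [genDelta_eq_adjugate, ← SLRing.adjugate_universalMatrix_apply]
    exact congrFun₂ SLRing.mapMatrix_inversion_universalMatrix _ _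
  rw [← hinv, MulEquiv.prime_iff]
  exact prime_universalMatrix_apply k _ _

theorem uniqueFactorizationMonoid_SLRing [IsNoetherianRing R] :
    UniqueFactorizationMonoid (SLRing R (k + 2)) := by
  let M : Matrix (Fin (k + 2)) (Fin (k + 2)) (MvPolynomial _ R) := varMatrix R Prod.mk
  let e := Fin.last (k + 1)
  have hM : ∀ a b, (a, b) ≠ (e, e) → M a b ∈ supported R ({(e, e)}ᶜ : Set _) := fun a b =>
    varMatrix_apply_mem_supported_compl_singleton fun _ _ _ _ => Prod.mk.inj
  have hexpand : genDet R (k + 2) - 1 = M.adjugate e e * X (e, e) +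
      ((M.updateRow e (Function.update (M e) e 0)).det - 1) := by
    rw [← add_sub_assoc]
    exact congrArg (· - 1) (det_eq_adjugate_mul_add_det_updateRow M e e)
  have := isPrime_span_genDet_sub_one (R := R) k
  refine uniqueFactorizationMonoid_quotient_mul_X_add hexpand
    (adjugate_mem_supported_compl_singleton hM)
    (sub_mem (det_updateRow_update_zero_mem_supported_compl_singleton hM) (one_mem _)) ?_
  rw [← genDelta_eq_adjugate _ (Nat.le_succ _)]
  exact prime_mk_genDelta k _

end SpecialLinear

theorem stmt1_general (R : Type*) [CommRing R] [IsDomain R] [IsNoetherianRing R]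
    [UniqueFactorizationMonoid R] (n : ℕ) (hn : 2 ≤ n) :
    ∃ _ : IsDomain (MvPolynomial (Fin n × Fin n) R ⧸ Ideal.span {genDet R n - 1}),
      UniqueFactorizationMonoid
        (MvPolynomial (Fin n × Fin n) R ⧸ Ideal.span {genDet R n - 1}) ∧
      Irreducible
        (Ideal.Quotient.mk (Ideal.span {genDet R n - 1})
          (genDelta R n (n - 1) (Nat.sub_le n 1))) := by
  obtain ⟨k, rfl⟩ := Nat.exists_eq_add_of_le' hn
  have := isPrime_span_genDet_sub_one (R := R) k
  exact ⟨inferInstance, uniqueFactorizationMonoid_SLRing k, (prime_mk_genDelta k _).irreducible⟩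

/-- for an algebraically closed field `K` and `n ≥ 2`, the coordinate ring
`K[SL_n] = K[Mat_n]/(det - 1)` is a unique factorisation domain, and the image `Δ'_{n-1}`
of the `(n-1)`-th principal minor in `K[SL_n]` is an irreducible element. -/
theorem stmt1 (K : Type*) [Field K] [IsAlgClosed K] (n : ℕ) (hn : 2 ≤ n) :
    ∃ _ : IsDomain (MvPolynomial (Fin n × Fin n) K ⧸ Ideal.span {genDet K n - 1}),
      UniqueFactorizationMonoid
        (MvPolynomial (Fin n × Fin n) K ⧸ Ideal.span {genDet K n - 1}) ∧
      Irreducible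
        (Ideal.Quotient.mk (Ideal.span {genDet K n - 1})
          (genDelta K n (n - 1) (by omega))) :=
  stmt1_general K n hn
end

section
/- Let K be an algebraically closed field and n ≥ 2. The only invertible elements of K[SL_n] are the nonzero scalars. -/
open MvPolynomial

/-! Write `A = R[Mat_ι] / (det - 1)`. An `R`-algebra map `A → S` is the same thing as a matrix in
`SL_ι(S)`, so an element `u` of `A` is a function on all these groups. If `u` is a unit and `S` is
reduced, then `t ↦ u (M * (1 + t E_ij))` is a unit of `S[t]`, hence constant. Over a field,
transvections generate `SL_ι`, so there `u` takes the single value `u 1`; testing on the residue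
fields of `A` shows that `u - u 1` is nilpotent. Finally `A` is reduced when `R` is: dividing a row
of the generic matrix by its determinant embeds `A` in the localization `R[Mat_ι][1 / det]`. -/

open Matrix

section SpecialLinearGroup

variable {ι : Type*} [Fintype ι] [DecidableEq ι]

theorem diag2n_eq_mul_transvections {F : Type*} [Field F] {i j : ι} (hij : i ≠ j) {a : F}
    (ha : a ≠ 0) :
    SpecialLinearGroup.diag2n hij a ha =
      SpecialLinearGroup.transvection hij.symm (a⁻¹ - 1) * SpecialLinearGroup.transvection hij 1 *
        SpecialLinearGroup.transvection hij.symm (a - 1) *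
          SpecialLinearGroup.transvection hij (-a⁻¹) := by
  ext k l
  simp only [SpecialLinearGroup.diag2n_coe, diagonal_apply, Matrix.SpecialLinearGroup.coe_mul,
    SpecialLinearGroup.transvection_coe, mul_add, add_mul, mul_one, one_mul,
    single_mul_single_same, single_mul_single_of_ne _ _ _ _ hij,
    single_mul_single_of_ne _ _ _ _ hij.symm, add_zero, Matrix.add_apply, one_apply, single_apply]
  grind

theorem map_transvection {S T : Type*} [CommRing S] [CommRing T] (f : S →+* T) {i j : ι}
    (hij : i ≠ j) (c : S) :
    (SpecialLinearGroup.transvection hij c).map f = SpecialLinearGroup.transvection hij (f c) := by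
  ext k l
  simp [SpecialLinearGroup.transvection_coe, one_apply, single_apply, apply_ite f]

theorem specialLinearGroup_transvection_induction {F : Type*} [Field F]
    {P : SpecialLinearGroup ι F → Prop} (one : P 1)
    (transvection : ∀ (i j : ι) (hij : i ≠ j) c, P (SpecialLinearGroup.transvection hij c))
    (mul : ∀ A B, P A → P B → P (A * B)) (A : SpecialLinearGroup ι F) : P A := by
  cases subsingleton_or_nontrivial ι with
  | inl _ => rwa [Subsingleton.elim A 1]
  | inr _ =>
    refine SpecialLinearGroup.diagonal_transvection_induction' P A (fun i j hij c hc ↦ ?_)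
      transvection mul
    rw [diag2n_eq_mul_transvections hij hc]
    exact mul _ _ (mul _ _ (mul _ _ (transvection ..) (transvection ..)) (transvection ..))
      (transvection ..)

theorem exists_specialLinearGroup_map_eq {S T : Type*} [CommRing S] [CommRing T] (f : S →+* T)
    {M : Matrix ι ι S} (hM : IsUnit M.det) (hf : f M.det = 1) :
    ∃ N : SpecialLinearGroup ι S, (N.map f : Matrix ι ι T) = f.mapMatrix M := by
  cases isEmpty_or_nonempty ι with
  | inl _ => exact ⟨1, Subsingleton.elim _ _⟩
  | inr h =>
    obtain ⟨i⟩ := h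
    obtain ⟨d, hd⟩ := hM.exists_left_inv
    have hfd : f d = 1 := by simpa [hf] using congrArg f hd
    refine ⟨⟨M.updateRow i (d • M i), by rw [det_updateRow_smul, updateRow_eq_self, hd]⟩, ?_⟩
    ext k l
    change f (M.updateRow i (d • M i) k l) = f (M k l)
    obtain rfl | hk := eq_or_ne k i <;> simp [*]

end SpecialLinearGroup

theorem polynomial_eval_eq_of_isUnit {S : Type*} [CommRing S] [IsReduced S] {p : Polynomial S}
    (hp : IsUnit p) (s t : S) : p.eval s = p.eval t := by
  have hdeg : p.natDegree = 0 := by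
    by_contra h
    exact Polynomial.not_isUnit_of_natDegree_pos_of_isReduced p (Nat.pos_of_ne_zero h) hp
  rw [Polynomial.eq_C_of_natDegree_eq_zero hdeg, Polynomial.eval_C, Polynomial.eval_C]

/-- The coordinate ring `R[SL_ι] = R[Mat_ι] / (det - 1)` of the special linear group over `R`. -/
abbrev SLCoordinateRing (ι R : Type*) [Fintype ι] [DecidableEq ι] [CommRing R] : Type _ :=
  MvPolynomial (ι × ι) R ⧸ Ideal.span {(mvPolynomialX ι ι R).det - 1}

namespace SLCoordinateRing

variable {ι R S T : Type*} [Fintype ι] [DecidableEq ι] [CommRing R] [CommRing S] [Algebra R S]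
  [CommRing T] [Algebra R T]

variable (ι R) in
/-- The universal point of `SL_ι`: the matrix of coordinate functions, over `R[SL_ι]` itself. -/
noncomputable def generic : SpecialLinearGroup ι (SLCoordinateRing ι R) :=
  ⟨(Ideal.Quotient.mk _).mapMatrix (mvPolynomialX ι ι R), by
    rw [← RingHom.map_det, ← map_one (Ideal.Quotient.mk _), Ideal.Quotient.eq]
    exact Ideal.mem_span_singleton_self _⟩

/-- Evaluation of functions in `R[SL_ι]` at a point `M` of `SL_ι` with entries in an
`R`-algebra. -/
noncomputable def eval (M : SpecialLinearGroup ι S) : SLCoordinateRing ι R →ₐ[R] S :=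
  Ideal.Quotient.liftₐ _ (aeval fun ij ↦ M.1 ij.1 ij.2) fun p hp ↦ by
    obtain ⟨q, rfl⟩ := Ideal.mem_span_singleton.mp hp
    rw [map_mul, map_sub, map_one, AlgHom.map_det, mvPolynomialX_mapMatrix_aeval, M.2, sub_self,
      zero_mul]

theorem map_generic_eval (M : SpecialLinearGroup ι S) :
    (generic ι R).map (eval (R := R) M : SLCoordinateRing ι R →+* S) = M := by
  ext i j
  exact aeval_X _ _

theorem algHom_ext {f g : SLCoordinateRing ι R →ₐ[R] S}
    (h : (generic ι R).map (f : SLCoordinateRing ι R →+* S) = (generic ι R).map g) : f = g := by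
  refine Ideal.Quotient.algHom_ext _ (MvPolynomial.algHom_ext fun ij ↦ ?_)
  exact congrArg (fun M : SpecialLinearGroup ι S ↦ M.1 ij.1 ij.2) h

theorem map_eval (f : S →ₐ[R] T) (M : SpecialLinearGroup ι S) (u : SLCoordinateRing ι R) :
    f (eval M u) = eval (M.map (f : S →+* T)) u := by
  suffices f.comp (eval M) = eval (M.map (f : S →+* T)) from DFunLike.congr_fun this u
  apply algHom_ext
  rw [map_generic_eval]
  exact congrArg (SpecialLinearGroup.map (f : S →+* T)) (map_generic_eval M)

theorem eval_generic (u : SLCoordinateRing ι R) : eval (generic ι R) u = u := by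
  suffices eval (generic ι R) = AlgHom.id R _ from DFunLike.congr_fun this u
  exact algHom_ext (map_generic_eval _)

theorem eval_mul_transvection [IsReduced S] {u : SLCoordinateRing ι R} (hu : IsUnit u)
    (M : SpecialLinearGroup ι S) {i j : ι} (hij : i ≠ j) (c : S) :
    eval (M * SpecialLinearGroup.transvection hij c) u = eval M u := by
  let line : SpecialLinearGroup ι (Polynomial S) :=
    M.map Polynomial.C * SpecialLinearGroup.transvection hij Polynomial.X
  have line_apply (t : S) :
      line.map ((Polynomial.aeval t).restrictScalars R : Polynomial S →ₐ[R] S) =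
        M * SpecialLinearGroup.transvection hij t := by
    rw [map_mul, map_transvection]
    congr 1
    · ext; simp
    · simp
  have eval_line (t : S) :
      (eval line u).eval t = eval (M * SpecialLinearGroup.transvection hij t) u := by
    rw [← line_apply, ← map_eval]
    simp [Polynomial.aeval_def]
  rw [← eval_line, polynomial_eval_eq_of_isUnit (hu.map (eval line)) c 0, eval_line,
    SpecialLinearGroup.transvection_coeff_zero, mul_one]

theorem eval_eq_eval_one_of_isUnit {F : Type*} [Field F] [Algebra R F]
    {u : SLCoordinateRing ι R} (hu : IsUnit u) (M : SpecialLinearGroup ι F) :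
    eval M u = eval (1 : SpecialLinearGroup ι F) u := by
  suffices ∀ A : SpecialLinearGroup ι F, eval (A * M) u = eval A u by simpa using this 1
  induction M using specialLinearGroup_transvection_induction with
  | one => simp
  | transvection i j hij c => exact fun A ↦ eval_mul_transvection hu A hij c
  | mul B C hB hC => intro A; rw [← mul_assoc, hC, hB]

theorem isNilpotent_sub_algebraMap_eval_one {u : SLCoordinateRing ι R} (hu : IsUnit u) :
    IsNilpotent (u - algebraMap R _ (eval (1 : SpecialLinearGroup ι R) u)) := by
  refine nilpotent_iff_mem_prime.mpr fun P _ ↦ ?_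
  let φ := IsScalarTower.toAlgHom R (SLCoordinateRing ι R) P.ResidueField
  have hφ : φ u = algebraMap R P.ResidueField (eval (1 : SpecialLinearGroup ι R) u) := calc
    φ u = eval ((generic ι R).map (φ : _ →+* P.ResidueField)) u := by
      rw [← map_eval, eval_generic]
    _ = eval (1 : SpecialLinearGroup ι P.ResidueField) u := eval_eq_eval_one_of_isUnit hu _
    _ = Algebra.ofId R P.ResidueField (eval (1 : SpecialLinearGroup ι R) u) := by
      rw [map_eval, map_one]
  rw [← Ideal.algebraMap_residueField_eq_zero, map_sub, sub_eq_zero,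
    ← IsScalarTower.algebraMap_apply]
  exact hφ

variable (ι R) in
theorem exists_leftInverse_eval_localizationAway_det :
    ∃ (N : SpecialLinearGroup ι (Localization.Away (mvPolynomialX ι ι R).det))
      (ρ : Localization.Away (mvPolynomialX ι ι R).det →ₐ[R] SLCoordinateRing ι R),
      Function.LeftInverse ρ (eval N) := by
  let D := (mvPolynomialX ι ι R).det
  let L := Localization.Away D
  let π : MvPolynomial (ι × ι) R →ₐ[R] SLCoordinateRing ι R := Ideal.Quotient.mkₐ R _
  have hπ : π D = 1 := (AlgHom.map_det _ _).trans (generic ι R).2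
  have hπ_unit : IsUnit (π D) := hπ ▸ isUnit_one
  let ρ : L →ₐ[R] SLCoordinateRing ι R := IsLocalization.Away.liftAlgHom D hπ_unit
  have hρ (p : MvPolynomial (ι × ι) R) : ρ (algebraMap _ L p) = π p :=
    IsLocalization.Away.lift_eq D hπ_unit p
  have hdet : ((algebraMap _ L).mapMatrix (mvPolynomialX ι ι R)).det = algebraMap _ L D :=
    (RingHom.map_det _ _).symm
  obtain ⟨N, hN⟩ := exists_specialLinearGroup_map_eq (ρ : L →+* SLCoordinateRing ι R)
    (hdet ▸ IsLocalization.Away.algebraMap_isUnit D) (hdet ▸ (hρ D).trans hπ)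
  have hN_generic : N.map (ρ : L →+* SLCoordinateRing ι R) = generic ι R := by
    refine Subtype.ext (hN.trans ?_)
    ext i j
    exact hρ _
  exact ⟨N, ρ, fun u ↦ by rw [map_eval, hN_generic, eval_generic]⟩

instance [IsReduced R] : IsReduced (SLCoordinateRing ι R) := by
  obtain ⟨N, ρ, hρ⟩ := exists_leftInverse_eval_localizationAway_det ι R
  exact isReduced_of_injective (eval N) hρ.injective

end SLCoordinateRing

theorem stmt2_general {ι R : Type*} [Fintype ι] [DecidableEq ι] [CommRing R] [IsReduced R]
    (u : SLCoordinateRing ι R) :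
    IsUnit u ↔ ∃ c : R, IsUnit c ∧ u = algebraMap R (SLCoordinateRing ι R) c := by
  constructor
  · intro hu
    exact ⟨SLCoordinateRing.eval (1 : SpecialLinearGroup ι R) u, hu.map _,
      sub_eq_zero.mp (SLCoordinateRing.isNilpotent_sub_algebraMap_eval_one hu).eq_zero⟩
  · rintro ⟨c, hc, rfl⟩
    exact hc.map _

/-- for an algebraically closed field `K` and `n ≥ 2`, the invertible elements
of `K[SL_n] = K[Mat_n]/(det - 1)` are exactly the nonzero scalars. -/
theorem stmt2 (K : Type*) [Field K] [IsAlgClosed K] (n : ℕ) (hn : 2 ≤ n)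
    (u : MvPolynomial (Fin n × Fin n) K ⧸ Ideal.span {genDet K n - 1}) :
    IsUnit u ↔ ∃ c : K, c ≠ 0 ∧
      u = algebraMap K (MvPolynomial (Fin n × Fin n) K ⧸ Ideal.span {genDet K n - 1}) c := by
  simp only [← isUnit_iff_ne_zero]
  exact stmt2_general u
end

section
/- With the lexicographic monomial order on ℤ[ξ_{ij}] given by ξ_{nn} > ξ_{n,n-1} > ⋯ > ξ_{n1} > ξ_{n-1,n} > ⋯ > ξ_{11}, the polynomial d = det((∂s_k/∂ξ_{in})_{k,i}) has leading term ±ξ_{n,n-1}^{n-1} ξ_{n-1,n-2}^{n-2} ⋯ ξ_{32}^2 ξ_{21}. -/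
open MvPolynomial

/-- The variable order `ξ_{nn} > ξ_{n,n-1} > ⋯ > ξ_{n1} > ξ_{n-1,n} > ⋯ > ξ_{11}`. -/
def varLt {n : ℕ} (v w : Fin n × Fin n) : Prop :=
  v.1 < w.1 ∨ (v.1 = w.1 ∧ v.2 < w.2)

/-- The corresponding lexicographic order on monomials (exponent vectors). -/
def lexLt {n : ℕ} (m m' : (Fin n × Fin n) →₀ ℕ) : Prop :=
  ∃ v : Fin n × Fin n, m v < m' v ∧ ∀ w : Fin n × Fin n, varLt v w → m w = m' w

/-- `s_k`: the sum of all `k × k` principal minors of the generic `n × n` matrix. -/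
noncomputable def sPoly (n k : ℕ) : MvPolynomial (Fin n × Fin n) ℤ :=
  ∑ Λ ∈ (Finset.univ.powersetCard k : Finset (Finset (Fin n))),
    Matrix.det (Matrix.of fun i j : Λ => X ((i : Fin n), (j : Fin n)))

/-- `d = det((∂s_k/∂ξ_{in})_{k,i})`. -/
noncomputable def dPolyZ (n : ℕ) (hn : 1 ≤ n) : MvPolynomial (Fin n × Fin n) ℤ :=
  Matrix.det (Matrix.of fun k i : Fin n =>
    pderiv (i, (⟨n - 1, by omega⟩ : Fin n)) (sPoly n ((k : ℕ) + 1)))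

/-- The exponent vector of the monomial `ξ_{n,n-1}^{n-1} ξ_{n-1,n-2}^{n-2} ⋯ ξ_{21}`:
the variable in (1-based) row `k+1`, column `k` gets exponent `k`. -/
noncomputable def dLeadMon (n : ℕ) : (Fin n × Fin n) →₀ ℕ :=
  Finsupp.equivFunOnFinite.symm fun v : Fin n × Fin n =>
    if (v.1 : ℕ) = (v.2 : ℕ) + 1 then (v.1 : ℕ) else 0

/-! The last row of `adj(1 + T ξ)` has the derivatives `∂s_k/∂ξ_{in}` as coefficients. Comparing
coefficients in `adj(1 + T ξ) (1 + T ξ) = det(1 + T ξ)` gives a first-order recurrence between the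
rows of `M`, by which `d` is the determinant of the Krylov matrix of `-ξ` and the last basis vector.
Expanding this determinant along its first row and solving a recurrence of the same kind, one finds
that it is also the Krylov determinant of `-ξ'` and `(ξ_{n1}, …, ξ_{n,n-1})`, where `ξ'` is the
top-left block of size `n - 1`. Write the vector as `ξ_{n,n-1} e_{n-1} + r`: by linearity, the
determinant is a polynomial of degree `n - 1` in `ξ_{n,n-1}`, whose coefficients involve smaller
variables only and whose top coefficient is the Krylov determinant of `-ξ'` and its last basis
vector, so that induction applies. -/

section Derivation

theorem derivation_prod {R A M ι : Type*} [CommSemiring R] [CommSemiring A] [Algebra R A]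
    [AddCommMonoid M] [Module A M] [Module R M] [DecidableEq ι] (D : Derivation R A M)
    (s : Finset ι) (f : ι → A) : D (∏ i ∈ s, f i) = ∑ i ∈ s, (∏ j ∈ s.erase i, f j) • D (f i) := by
  induction s using Finset.induction_on with
  | empty => simp
  | insert a s ha ih =>
    rw [Finset.prod_insert ha, D.leibniz, ih, Finset.sum_insert ha, Finset.erase_insert ha,
      add_comm, Finset.smul_sum]
    congr 1
    refine Finset.sum_congr rfl fun i hi => ?_
    have hai : a ≠ i := fun h => ha (h ▸ hi)
    rw [Finset.erase_insert_of_ne hai, Finset.prod_insert (by simp [ha]), mul_smul]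

variable {A ι : Type*} [CommRing A] [Fintype ι] [DecidableEq ι]

theorem adjugate_apply_eq_sum_perm (B : Matrix ι ι A) (i j : ι) :
    B.adjugate j i = ∑ σ : Equiv.Perm ι,
      if σ j = i then Equiv.Perm.sign σ • ∏ l ∈ Finset.univ.erase j, B (σ l) l else 0 := by
  rw [← Matrix.transpose_apply B.adjugate, Matrix.adjugate_transpose, Matrix.adjugate_apply,
    Matrix.updateRow_transpose, Matrix.det_transpose, Matrix.det_apply]
  refine Finset.sum_congr rfl fun σ _ => ?_
  have hne : ∏ l ∈ Finset.univ.erase j, B.updateCol j (Pi.single i 1) (σ l) l =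
      ∏ l ∈ Finset.univ.erase j, B (σ l) l :=
    Finset.prod_congr rfl fun l hl => Matrix.updateCol_ne (Finset.ne_of_mem_erase hl)
  rw [← Finset.mul_prod_erase _ _ (Finset.mem_univ j), hne, Matrix.updateCol_self, Pi.single_apply]
  split_ifs <;> simp

theorem derivation_det {R M : Type*} [CommSemiring R] [Algebra R A] [AddCommGroup M] [Module A M]
    [Module R M] (D : Derivation R A M) (B : Matrix ι ι A) :
    D B.det = ∑ j, ∑ i, B.adjugate j i • D (B i j) := by
  simp_rw [Matrix.det_apply, map_sum, Units.smul_def, map_zsmul, derivation_prod,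
    adjugate_apply_eq_sum_perm, Finset.sum_smul, ite_smul, zero_smul, Finset.smul_sum]
  rw [Finset.sum_comm]
  refine Finset.sum_congr rfl fun j _ => ?_
  rw [Finset.sum_comm]
  simp only [Finset.sum_ite_eq, Finset.mem_univ, if_true, smul_assoc, Units.smul_def]

end Derivation

section Krylov

open Matrix Finset

variable {n : ℕ}

section Semiring

variable {R : Type*} [CommSemiring R]

/-- The Krylov matrix of `A` and the row vector `v`, with rows `v`, `v A`, …, `v A ^ (n - 1)`. -/
def krylov (A : Matrix (Fin n) (Fin n) R) (v : Fin n → R) : Matrix (Fin n) (Fin n) R :=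
  of fun k => v ᵥ* A ^ (k : ℕ)

theorem krylov_smul_add (A : Matrix (Fin n) (Fin n) R) (x : R) (v w : Fin n → R) :
    krylov A (x • v + w) = x • krylov A v + krylov A w := by
  ext k j
  simp [krylov, add_vecMul, smul_vecMul]

theorem krylov_mem_matrix {K : Type*} [CommSemiring K] [Algebra K R] {S : Subalgebra K R}
    {A : Matrix (Fin n) (Fin n) R} {v : Fin n → R} (hA : A ∈ S.matrix) (hv : ∀ j, v j ∈ S) :
    krylov A v ∈ S.matrix := by
  intro k j
  change ∑ i, v i * (A ^ (k : ℕ)) i j ∈ S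
  exact S.sum_mem fun i _ => S.mul_mem (hv i) (pow_mem hA (k : ℕ) i j)

theorem eq_sum_smul_vecMul_pow_of_recurrence {ι : Type*} [Fintype ι] [DecidableEq ι]
    {A : Matrix ι ι R} {v : ι → R} {w : ℕ → ι → R} {c : ℕ → R} (h0 : w 0 = c 0 • v)
    (hs : ∀ k, w (k + 1) = w k ᵥ* A + c (k + 1) • v) (k : ℕ) :
    w k = ∑ i ∈ range (k + 1), c (k - i) • (v ᵥ* A ^ i) := by
  induction k with
  | zero => simp [h0]
  | succ k ih =>
    rw [hs, ih, sum_range_succ' _ (k + 1)]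
    simp [sum_vecMul, smul_vecMul, pow_succ]

end Semiring

variable {R : Type*} [CommRing R]

theorem det_of_recurrence {A : Matrix (Fin n) (Fin n) R} {v : Fin n → R} {w : ℕ → Fin n → R}
    {c : ℕ → R} (h0 : w 0 = c 0 • v) (hs : ∀ k, w (k + 1) = w k ᵥ* A + c (k + 1) • v) :
    det (of fun k : Fin n => w k) = c 0 ^ n * det (krylov A v) := by
  let L : Matrix (Fin n) (Fin n) R := of fun k i => if i ≤ k then c (k - i) else 0
  have hL : L.IsLowerTriangular := fun k i (hki : k < i) => if_neg hki.not_ge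
  have hw : (of fun k : Fin n => w k) = L * krylov A v := by
    ext k j
    simp only [of_apply, eq_sum_smul_vecMul_pow_of_recurrence h0 hs, mul_apply]
    have hrange : range (k + 1) = {i ∈ range n | i ≤ (k : ℕ)} := by
      ext i
      simp only [mem_range, mem_filter]
      omega
    rw [hrange, Finset.sum_apply, sum_filter,
      ← Fin.sum_univ_eq_sum_range fun i => if i ≤ (k : ℕ) then (c (k - i) • v ᵥ* A ^ i) j else 0]
    refine sum_congr rfl fun i _ => ?_
    simp [L, krylov, ite_mul]
  rw [hw, det_mul, det_of_isLowerTriangular _ hL]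
  simp [L]

theorem det_krylov_neg_single_last (A : Matrix (Fin (n + 1)) (Fin (n + 1)) R) :
    det (krylov (-A) (Pi.single (Fin.last n) 1)) =
      det (krylov (-A.submatrix Fin.castSucc Fin.castSucc) fun j => A (Fin.last n) j.castSucc) := by
  let w (k : ℕ) (j : Fin n) : R := ((-A) ^ (k + 1)) (Fin.last n) j.castSucc
  have hw : det (of fun k : Fin n => w k) = (-1) ^ n *
      det (krylov (-A.submatrix Fin.castSucc Fin.castSucc) fun j => A (Fin.last n) j.castSucc) := by
    let c (k : ℕ) : R := -((-A) ^ k) (Fin.last n) (Fin.last n)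
    have hc : c 0 = -1 := by simp [c]
    rw [← hc]
    refine det_of_recurrence ?_ fun k => ?_
    · ext j
      simp [w, c]
    · ext j
      simp only [w, c, pow_succ _ (k + 1), mul_apply, Fin.sum_univ_castSucc]
      simp [vecMul, dotProduct]
  have hminor : (krylov (-A) (Pi.single (Fin.last n) 1)).submatrix Fin.succ
      (Fin.last n).succAbove = of fun k : Fin n => w k := by
    ext k j
    simp [krylov, w]
  rw [det_succ_row_zero, Fintype.sum_eq_single (Fin.last n), hminor, hw]
  · simp [krylov, ← mul_assoc, ← mul_pow]
  · intro j hj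
    simp [krylov, hj.symm]

end Krylov

section Adjugate

open Matrix

variable {R ι : Type*} [CommRing R] [Fintype ι] [DecidableEq ι]

/-- The matrix pencil `1 + T A`; the coefficients of its determinant are the sums of principal
minors of `A`. -/
noncomputable def oneAddXSMul (A : Matrix ι ι R) : Matrix ι ι (Polynomial R) :=
  1 + (Polynomial.X : Polynomial R) • A.map Polynomial.C

theorem adjugate_oneAddXSMul (A : Matrix ι ι R) :
    adjugate (oneAddXSMul A) = det (oneAddXSMul A) • 1 -
        (Polynomial.X : Polynomial R) • (adjugate (oneAddXSMul A) * A.map Polynomial.C) := by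
  rw [eq_sub_iff_add_eq, ← adjugate_mul, ← mul_smul_comm]
  nth_rw 4 [oneAddXSMul]
  rw [mul_add, mul_one]

theorem coeff_zero_adjugate_oneAddXSMul (A : Matrix ι ι R) (i : ι) :
    (fun j => (adjugate (oneAddXSMul A) i j).coeff 0) =
      (det (oneAddXSMul A)).coeff 0 • Pi.single i 1 := by
  ext j
  rw [adjugate_oneAddXSMul]
  by_cases hij : i = j <;> simp [hij, one_apply, eq_comm]

theorem coeff_succ_adjugate_oneAddXSMul (A : Matrix ι ι R) (i : ι) (k : ℕ) :
    (fun j => (adjugate (oneAddXSMul A) i j).coeff (k + 1)) =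
      (fun j => (adjugate (oneAddXSMul A) i j).coeff k) ᵥ* (-A) +
        (det (oneAddXSMul A)).coeff (k + 1) • Pi.single i 1 := by
  ext j
  conv_lhs => rw [adjugate_oneAddXSMul]
  by_cases hij : i = j <;>
    simp [hij, one_apply, mul_apply, vecMul, dotProduct, eq_comm, neg_add_eq_sub]

end Adjugate

section Pencil

open Matrix

theorem coeff_det_oneAddXSMul_mvPolynomialX (n k : ℕ) :
    (det (oneAddXSMul (mvPolynomialX (Fin n) (Fin n) ℤ))).coeff k = sPoly n k := by
  rw [oneAddXSMul, coeff_det_one_add_X_smul_eq_sum_minors]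
  rfl

theorem sPoly_zero (n : ℕ) : sPoly n 0 = 1 := by
  simp [sPoly]

theorem mapCoeffs_pderiv_oneAddXSMul_mvPolynomialX {R ι : Type*} [CommRing R] [DecidableEq ι]
    (i j a b : ι) :
    (pderiv (i, j)).mapCoeffs (oneAddXSMul (mvPolynomialX ι ι R) a b) =
      if a = i ∧ b = j then PolynomialModule.single _ 1 1 else 0 := by
  have hone : (pderiv (i, j)).mapCoeffs
      ((1 : Matrix ι ι (Polynomial (MvPolynomial (ι × ι) R))) a b) = 0 := by
    rw [one_apply]
    split_ifs <;> simp
  rw [oneAddXSMul, Matrix.add_apply, Matrix.smul_apply, map_apply, mvPolynomialX_apply,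
    smul_eq_mul, map_add, hone, zero_add, Derivation.leibniz, Derivation.mapCoeffs_X, smul_zero,
    add_zero, Derivation.mapCoeffs_C, pderiv_X, Pi.single_apply]
  simp only [Prod.mk.injEq, @eq_comm _ a, @eq_comm _ b]
  split_ifs <;> simp [← Polynomial.monomial_one_one_eq_X, PolynomialModule.monomial_smul_single]

theorem pderiv_sPoly (n k : ℕ) (i j : Fin n) :
    pderiv (i, j) (sPoly n (k + 1)) =
      (adjugate (oneAddXSMul (mvPolynomialX (Fin n) (Fin n) ℤ)) j i).coeff k := by
  rw [← coeff_det_oneAddXSMul_mvPolynomialX, ← Derivation.mapCoeffs_apply, derivation_det]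
  simp only [mapCoeffs_pderiv_oneAddXSMul_mvPolynomialX]
  rw [Fintype.sum_eq_single j (by intro b hb; simp [hb]),
    Fintype.sum_eq_single i (by intro a ha; simp [ha])]
  simp [PolynomialModule.smul_single_apply]

theorem dPolyZ_eq_det_krylov (n : ℕ) (hn : 1 ≤ n + 1) :
    dPolyZ (n + 1) hn =
      det (krylov (-mvPolynomialX (Fin (n + 1)) (Fin (n + 1)) ℤ) (Pi.single (Fin.last n) 1)) := by
  let P := oneAddXSMul (mvPolynomialX (Fin (n + 1)) (Fin (n + 1)) ℤ)
  have hdet : det (of fun k : Fin (n + 1) => fun j => (adjugate P (Fin.last n) j).coeff k) =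
      (det P).coeff 0 ^ (n + 1) * det (krylov (-mvPolynomialX (Fin (n + 1)) (Fin (n + 1)) ℤ)
        (Pi.single (Fin.last n) 1)) :=
    det_of_recurrence (w := fun k j => (adjugate P (Fin.last n) j).coeff k) (c := (det P).coeff)
      (coeff_zero_adjugate_oneAddXSMul _ _)
      (coeff_succ_adjugate_oneAddXSMul _ _)
  rw [coeff_det_oneAddXSMul_mvPolynomialX, sPoly_zero, one_pow, one_mul] at hdet
  rw [← hdet, dPolyZ]
  simp only [pderiv_sPoly]
  rfl

end Pencil

section LeadingTerm

variable {R : Type*} [CommSemiring R] {n : ℕ}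

/-- The leading term of `p` for the order `lexLt` is the monomial `m`, with coefficient `1`. -/
def HasMonicLeadingTerm (p : MvPolynomial (Fin n × Fin n) R) (m : (Fin n × Fin n) →₀ ℕ) : Prop :=
  p.coeff m = 1 ∧ ∀ m' ∈ p.support, m' ≠ m → lexLt m' m

theorem lexLt_irrefl (m : (Fin n × Fin n) →₀ ℕ) : ¬lexLt m m :=
  fun ⟨_, hv, _⟩ => hv.false

theorem lexLt_add_right {m m' : (Fin n × Fin n) →₀ ℕ} (h : lexLt m m') (q) :
    lexLt (m + q) (m' + q) := by
  obtain ⟨v, hv, heq⟩ := h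
  exact ⟨v, by simpa using hv, fun w hw => by simp [heq w hw]⟩

theorem hasMonicLeadingTerm_one :
    HasMonicLeadingTerm (1 : MvPolynomial (Fin n × Fin n) R) 0 := by
  refine ⟨coeff_zero_one, fun m hm hne => absurd ?_ (mem_support_iff.1 hm)⟩
  rw [coeff_one, if_neg hne.symm]

theorem exists_add_single_of_mem_support_mul_X_pow {σ : Type*} {p : MvPolynomial σ R} {v : σ}
    {k : ℕ} {m : σ →₀ ℕ} (hm : m ∈ (p * X v ^ k).support) :
    ∃ q ∈ p.support, q + Finsupp.single v k = m := by
  rw [X_pow_eq_monomial, mem_support_iff, coeff_mul_monomial', mul_one, ne_eq, ite_eq_right_iff,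
    Classical.not_imp] at hm
  exact ⟨m - Finsupp.single v k, mem_support_iff.2 hm.2, tsub_add_cancel_of_le hm.1⟩

theorem HasMonicLeadingTerm.mul_X_pow {p : MvPolynomial (Fin n × Fin n) R}
    {m : (Fin n × Fin n) →₀ ℕ} (hp : HasMonicLeadingTerm p m) (v : Fin n × Fin n) (k : ℕ) :
    HasMonicLeadingTerm (p * X v ^ k) (m + Finsupp.single v k) := by
  refine ⟨by rw [X_pow_eq_monomial, coeff_mul_monomial, hp.1, one_mul], fun m' hm' hne => ?_⟩
  obtain ⟨q, hq, rfl⟩ := exists_add_single_of_mem_support_mul_X_pow hm'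
  exact lexLt_add_right (hp.2 q hq fun h => hne (h ▸ rfl)) _

theorem HasMonicLeadingTerm.add {p q : MvPolynomial (Fin n × Fin n) R}
    {m : (Fin n × Fin n) →₀ ℕ} (hp : HasMonicLeadingTerm p m)
    (hq : ∀ m' ∈ q.support, lexLt m' m) : HasMonicLeadingTerm (p + q) m := by
  have hqm : q.coeff m = 0 := notMem_support_iff.1 fun hm => lexLt_irrefl m (hq m hm)
  refine ⟨by rw [coeff_add, hp.1, hqm, add_zero], fun m' hm' hne => ?_⟩
  rcases Finset.mem_union.1 (support_add hm') with h | h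
  · exact hp.2 m' h hne
  · exact hq m' h

theorem apply_eq_zero_of_mem_supported {σ : Type*} {s : Set σ} {p : MvPolynomial σ R}
    (hp : p ∈ supported R s) {m : σ →₀ ℕ} (hm : m ∈ p.support) {w : σ} (hw : w ∉ s) : m w = 0 := by
  by_contra h
  exact hw (mem_supported.1 hp
    ((mem_vars_iff_mem_support w).2 ⟨m, hm, Finsupp.mem_support_iff.2 h⟩))

theorem lexLt_of_mem_support_sum_mul_X_pow {v : Fin n × Fin n} {k : ℕ}
    {c : ℕ → MvPolynomial (Fin n × Fin n) R} (hc : ∀ i, c i ∈ supported R {w | varLt w v})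
    {m m' : (Fin n × Fin n) →₀ ℕ} (hv : k ≤ m v) (hm : ∀ w, varLt v w → m w = 0)
    (hm' : m' ∈ (∑ i ∈ Finset.range k, c i * X v ^ i).support) : lexLt m' m := by
  classical
  obtain ⟨i, hi, hm'⟩ := Finset.mem_biUnion.1 (support_sum hm')
  obtain ⟨q, hq, rfl⟩ := exists_add_single_of_mem_support_mul_X_pow hm'
  have hqv : q v = 0 := apply_eq_zero_of_mem_supported (hc i) hq (by simp [varLt])
  refine ⟨v, ?_, fun w hw => ?_⟩
  · rw [Finsupp.add_apply, hqv, zero_add, Finsupp.single_eq_same]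
    exact (Finset.mem_range.1 hi).trans_le hv
  · have hvw : v ≠ w := by
      rintro rfl
      simp [varLt] at hw
    have hqw : q w = 0 := apply_eq_zero_of_mem_supported (hc i) hq
      (by simp only [varLt, Set.mem_ofPred_eq] at hw ⊢; omega)
    rw [Finsupp.add_apply, hqw, Finsupp.single_eq_of_ne hvw.symm, hm w hw, add_zero]

end LeadingTerm

section DetExpansion

open Matrix

variable {K R ι : Type*} [CommRing K] [CommRing R] [Algebra K R] [Fintype ι] [DecidableEq ι]

theorem exists_det_smul_add_eq {S : Subalgebra K R} {P Q : Matrix ι ι R} (hP : P ∈ S.matrix)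
    (hQ : Q ∈ S.matrix) (x : R) :
    ∃ c : ℕ → R, (∀ i, c i ∈ S) ∧ det (x • P + Q) = det P * x ^ Fintype.card ι +
      ∑ i ∈ Finset.range (Fintype.card ι), c i * x ^ i := by
  let P' : Matrix ι ι S := of fun i j => ⟨P i j, hP i j⟩
  let Q' : Matrix ι ι S := of fun i j => ⟨Q i j, hQ i j⟩
  let p : Polynomial S :=
    det ((Polynomial.X : Polynomial S) • P'.map Polynomial.C + Q'.map Polynomial.C)
  have hp : Polynomial.aeval x p = det (x • P + Q) := by
    rw [AlgHom.map_det]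
    congr 1
    ext i j
    simp [P', Q', mul_comm x]
  have hlead : (p.coeff (Fintype.card ι) : R) = det P := by
    rw [Polynomial.coeff_det_X_add_C_card, ← Subalgebra.coe_val, AlgHom.map_det]
    rfl
  refine ⟨fun i => p.coeff i, fun i => (p.coeff i).2, ?_⟩
  rw [← hp, Polynomial.aeval_eq_sum_range' (Nat.lt_succ_of_le
    (Polynomial.natDegree_det_X_add_C_le P' Q')), Finset.sum_range_succ, add_comm, ← hlead]
  rfl

end DetExpansion

section Induction

open Matrix

variable {n t : ℕ}

/-- The top-left `t × t` block of the generic `n × n` matrix. -/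
noncomputable def genericBlock (R : Type*) [CommRing R] (h : t ≤ n) :
    Matrix (Fin t) (Fin t) (MvPolynomial (Fin n × Fin n) R) :=
  (mvPolynomialX (Fin n) (Fin n) R).submatrix (Fin.castLE h) (Fin.castLE h)

theorem genericBlock_apply {R : Type*} [CommRing R] (h : t ≤ n) (i j : Fin t) :
    genericBlock R h i j = X (i.castLE h, j.castLE h) := rfl

/-- The index of the subdiagonal variable `ξ_{t+2,t+1}`; rows and columns are counted from `0`. -/
def subdiagVar (h : t + 1 < n) : Fin n × Fin n :=
  (⟨t + 1, h⟩, ⟨t, t.lt_succ_self.trans h⟩)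

/-- The exponent vector of `ξ_{21} ξ_{32}^2 ⋯ ξ_{t+1,t}^t`. -/
noncomputable def subdiagMon (n t : ℕ) : (Fin n × Fin n) →₀ ℕ :=
  Finsupp.equivFunOnFinite.symm fun v =>
    if (v.1 : ℕ) = v.2 + 1 ∧ (v.1 : ℕ) ≤ t then (v.1 : ℕ) else 0

theorem subdiagMon_apply (n t : ℕ) (v : Fin n × Fin n) :
    subdiagMon n t v = if (v.1 : ℕ) = v.2 + 1 ∧ (v.1 : ℕ) ≤ t then (v.1 : ℕ) else 0 := rfl

theorem subdiagMon_zero (n : ℕ) : subdiagMon n 0 = 0 := by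
  ext v
  simp only [subdiagMon_apply, Finsupp.zero_apply]
  split_ifs <;> omega

theorem subdiagMon_succ (h : t + 1 < n) :
    subdiagMon n (t + 1) = subdiagMon n t + Finsupp.single (subdiagVar h) (t + 1) := by
  ext ⟨a, b⟩
  simp only [subdiagMon_apply, subdiagVar, Finsupp.add_apply, Finsupp.single_apply, Prod.mk.injEq,
    Fin.ext_iff]
  split_ifs <;> omega

theorem subdiagMon_self (n : ℕ) : subdiagMon (n + 1) n = dLeadMon (n + 1) := by
  ext ⟨a, b⟩
  simp only [subdiagMon_apply, dLeadMon, Finsupp.equivFunOnFinite_symm_apply_apply]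
  split_ifs <;> omega

variable {R : Type*} [CommRing R]

theorem exists_genericBlock_last_eq (h : t + 1 < n) :
    ∃ r : Fin (t + 1) → MvPolynomial (Fin n × Fin n) R,
      (∀ j, r j ∈ supported R {w | varLt w (subdiagVar h)}) ∧
      (fun j : Fin (t + 1) => genericBlock R h (Fin.last (t + 1)) j.castSucc) =
        (X (subdiagVar h) : MvPolynomial _ R) • Pi.single (Fin.last t) 1 + r := by
  let r (j : Fin (t + 1)) : MvPolynomial (Fin n × Fin n) R :=
    if j = Fin.last t then 0 else genericBlock R h (Fin.last (t + 1)) j.castSucc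
  refine ⟨r, fun j => ?_, funext fun j => ?_⟩
  · by_cases hj : j = Fin.last t
    · simp [r, hj]
    · have hlt : varLt ((Fin.last (t + 1)).castLE h, j.castSucc.castLE h) (subdiagVar h) :=
        Or.inr ⟨rfl, Fin.val_lt_last hj⟩
      simp only [r, if_neg hj, genericBlock_apply]
      exact Algebra.subset_adjoin ⟨_, hlt, rfl⟩
  · by_cases hj : j = Fin.last t
    · simp [r, hj, genericBlock_apply, subdiagVar, Fin.castLE]
    · simp [r, hj]

theorem det_krylov_genericBlock_succ (h : t + 1 < n) :
    ∃ c : ℕ → MvPolynomial (Fin n × Fin n) R,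
      (∀ i, c i ∈ supported R {w | varLt w (subdiagVar h)}) ∧
      det (krylov (-genericBlock R h) (Pi.single (Fin.last (t + 1)) 1)) =
        det (krylov (-genericBlock R h.le) (Pi.single (Fin.last t) 1)) *
            X (subdiagVar h) ^ (t + 1) +
          ∑ i ∈ Finset.range (t + 1), c i * X (subdiagVar h) ^ i := by
  obtain ⟨r, hr, hrow⟩ := exists_genericBlock_last_eq (R := R) h
  have hblock : -genericBlock R h.le ∈ (supported R {w | varLt w (subdiagVar h)}).matrix :=
    neg_mem fun i j => Algebra.subset_adjoin ⟨_, Or.inl i.2, rfl⟩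
  have hsingle (j : Fin (t + 1)) : (Pi.single (Fin.last t) 1 : Fin (t + 1) → MvPolynomial _ R) j ∈
      supported R {w | varLt w (subdiagVar h)} := by
    by_cases hj : j = Fin.last t <;> simp [hj]
  obtain ⟨c, hcS, hc⟩ := exists_det_smul_add_eq (krylov_mem_matrix hblock hsingle)
    (krylov_mem_matrix hblock hr) (X (subdiagVar h))
  rw [Fintype.card_fin, ← krylov_smul_add, ← hrow] at hc
  exact ⟨c, hcS, (det_krylov_neg_single_last _).trans hc⟩

theorem hasMonicLeadingTerm_det_krylov_genericBlock (h : t < n) :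
    HasMonicLeadingTerm (det (krylov (-genericBlock R h) (Pi.single (Fin.last t) 1)))
      (subdiagMon n t) := by
  induction t with
  | zero => simpa [krylov, subdiagMon_zero] using hasMonicLeadingTerm_one
  | succ t ih =>
    obtain ⟨c, hcS, hc⟩ := det_krylov_genericBlock_succ (R := R) h
    rw [hc, subdiagMon_succ h]
    refine ((ih (by omega)).mul_X_pow _ _).add fun m hm =>
      lexLt_of_mem_support_sum_mul_X_pow hcS (by simp) (fun w hw => ?_) hm
    rw [← subdiagMon_succ h, subdiagMon_apply, if_neg]
    simp only [varLt, subdiagVar, Fin.lt_def, Fin.ext_iff] at hw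
    omega

end Induction

theorem stmt13_general (n : ℕ) (hn : 1 ≤ n) : HasMonicLeadingTerm (dPolyZ n hn) (dLeadMon n) := by
  obtain ⟨t, rfl⟩ := Nat.exists_eq_add_of_le' hn
  rw [dPolyZ_eq_det_krylov, ← subdiagMon_self]
  exact hasMonicLeadingTerm_det_krylov_genericBlock t.lt_succ_self

/-- with respect to the lexicographic order above, `d` has leading term
`± ξ_{n,n-1}^{n-1} ξ_{n-1,n-2}^{n-2} ⋯ ξ_{32}^2 ξ_{21}`. -/
theorem stmt13 (n : ℕ) (hn : 2 ≤ n) :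
    ((dPolyZ n (by omega)).coeff (dLeadMon n) = 1 ∨
     (dPolyZ n (by omega)).coeff (dLeadMon n) = -1) ∧
    ∀ m ∈ (dPolyZ n (by omega)).support, m ≠ dLeadMon n → lexLt m (dLeadMon n) :=
  (stmt13_general n (by omega)).imp_left Or.inl
end
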